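/- Let L be a finite lattice with more than one element, with join-presentation (J(L), ≤, M), and let F_L = (J(L), σ_M) be its associated monotone neighbourhood frame, where σ_M(j) := {S ⊆ J(L) | ∃ C ∈ M(j), C ⊆ S}. Then for every lattice term t over AtProp, every join-irreducible j ∈ J(L), and every assignment v : AtProp ∪ Nom → L with v(𝐣) = j (where nominals are sent to join-irreducibles): L, v ⊨ 𝐣 ≤ t if and only if F_L, v*, j ⊩ ST(t), where v*(x) := {k ∈ J(L) | k ≤ v(x)} and ST is the standard translation defined by ST(p) = p, ST(⊤) = ⊤, ST(⊥) = ⊥, ST(t ∧ s) = ST(t) ∧ ST(s), ST(t ∨ s) = (∃∀)(ST(t) ∨ ST(s)). -/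

import Mathlib

/-- Formulas of monotone modal logic over atomic propositions `P`:
`φ ::= ⊥ | ⊤ | p | ¬φ | φ ∨ φ | φ ∧ φ | (∃∀)φ | (∀∃)φ`. -/
inductive MForm (P : Type*) where
  | bot : MForm P
  | top : MForm P
  | atom (p : P) : MForm P
  | neg (φ : MForm P) : MForm P
  | or (φ ψ : MForm P) : MForm P
  | and (φ ψ : MForm P) : MForm P
  | exAll (φ : MForm P) : MForm P
  | allEx (φ : MForm P) : MForm P

/-- Satisfaction of a monotone modal formula at a state `w` of a neighbourhood
model `((X, σ), v)`. -/
def MSat {X P : Type*} (σ : X → Set (Set X)) (v : P → Set X) :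
    MForm P → X → Prop
  | .bot, _ => False
  | .top, _ => True
  | .atom p, w => w ∈ v p
  | .neg φ, w => ¬ MSat σ v φ w
  | .or φ ψ, w => MSat σ v φ w ∨ MSat σ v ψ w
  | .and φ ψ, w => MSat σ v φ w ∧ MSat σ v ψ w
  | .exAll φ, w => ∃ C ∈ σ w, ∀ c ∈ C, MSat σ v φ c
  | .allEx φ, w => ∀ C ∈ σ w, ∃ c ∈ C, MSat σ v φ c

/-- Lattice terms over atomic propositions `P`: `t ::= ⊥ | ⊤ | p | t ∨ t | t ∧ t`. -/
inductive LTerm (P : Type*) where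
  | bot : LTerm P
  | top : LTerm P
  | atom (p : P) : LTerm P
  | or (t s : LTerm P) : LTerm P
  | and (t s : LTerm P) : LTerm P

/-- Interpretation of a lattice term in a lattice `L` under an assignment `v`. -/
def LTerm.interp {L P : Type*} [Lattice L] [BoundedOrder L] (v : P → L) :
    LTerm P → L
  | .bot => ⊥
  | .top => ⊤
  | .atom p => v p
  | .or t s => t.interp v ⊔ s.interp v
  | .and t s => t.interp v ⊓ s.interp v

/-- The standard translation from lattice terms to monotone modal formulas:
`STr(p) = p`, `STr(⊤) = ⊤`, `STr(⊥) = ⊥`, `STr(t ∧ s) = STr(t) ∧ STr(s)`,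
`STr(t ∨ s) = (∃∀)(STr(t) ∨ STr(s))`. -/
def STr {P : Type*} : LTerm P → MForm P
  | .bot => .bot
  | .top => .top
  | .atom p => .atom p
  | .or t s => .exAll (.or (STr t) (STr s))
  | .and t s => .and (STr t) (STr s)

/-- The refinement relation: `A ≪ B` iff every element of `A` is below some element of `B`. -/
def Refines {L : Type*} [Preorder L] (A B : Set L) : Prop :=
  ∀ a ∈ A, ∃ b ∈ B, a ≤ b

/-- An element `j ≠ ⊥` is join-irreducible if `j = a ∨ b` implies `j = a` or `j = b`. -/
def JoinIrr {L : Type*} [Lattice L] [OrderBot L] (j : L) : Prop :=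
  j ≠ ⊥ ∧ ∀ a b : L, j = a ⊔ b → j = a ∨ j = b

/-- `C` is a minimal join-cover of `a`: `C` is a join-cover of `a` (`a ≤ ⋁C`), `C` is an
`≤`-antichain, and every `≤`-antichain `D` with `a ≤ ⋁D` and `D ≪ C` equals `C`. -/
def MinJoinCover {L : Type*} [CompleteLattice L] (a : L) (C : Set L) : Prop :=
  a ≤ sSup C ∧ IsAntichain (· ≤ ·) C ∧
    ∀ D : Set L, IsAntichain (· ≤ ·) D → a ≤ sSup D → Refines D C → D = C

/-- The neighbourhood function of the monotone neighbourhood frame `F_L` associated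
with a finite lattice `L`: the states are the join-irreducibles of `L` and
`σ_M(j) := {S ⊆ J(L) | ∃ C ∈ M(j), C ⊆ S}`. -/
def sigmaM {L : Type*} [CompleteLattice L] (j : {x : L // JoinIrr x}) :
    Set (Set {x : L // JoinIrr x}) :=
  {S | ∃ C : Set L, MinJoinCover (j : L) C ∧ C ⊆ Subtype.val '' S}

/-!
For a join-irreducible `j`, `j ≤ ⋁A` holds iff some minimal join-cover of `j` consists of
join-irreducibles lying below elements of `A`; for `A = {t, s}` this is exactly the modal clause
translating `t ∨ s`, and the theorem follows by induction on terms.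

Such a minimal join-cover is found as a finite join-cover that is minimal in the colexicographic
order on finite sets. This order is well founded as soon as `<` is, being contained in the
Dershowitz–Manna order, and `D ≤ C` in it means `D ≪ C` when `D` is an antichain. Deleting an
element of a finite set, or replacing it by smaller ones, makes the set smaller, so a colex-minimal
join-cover is an antichain of join-irreducibles. By the ascending chain condition every element is
compact, so only finite competing covers matter.
-/

section Order

variable {α : Type*}

theorem Refines.eq_of_subset [PartialOrder α] {C D : Set α} (hDC : Refines D C)
    (hD : IsAntichain (· ≤ ·) D) (hCD : C ⊆ D) : D = C := by
  refine Set.Subset.antisymm (fun d hd ↦ ?_) hCD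
  obtain ⟨c, hc, hdc⟩ := hDC d hd
  rwa [hD.eq hd (hCD hc) hdc]

theorem refines_of_toColex_le_toColex [PartialOrder α] {s t : Finset α}
    (hst : toColex s ≤ toColex t) : Refines (s : Set α) t := by
  intro a has
  by_cases hat : a ∈ t
  · exact ⟨a, hat, le_rfl⟩
  · obtain ⟨b, hbt, -, hab⟩ := hst has hat
    exact ⟨b, hbt, hab⟩

theorem Refines.toColex_le_toColex [PartialOrder α] {s t : Finset α}
    (hst : Refines (s : Set α) t) (hs : IsAntichain (· ≤ ·) (s : Set α)) :
    toColex s ≤ toColex t := by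
  intro a has hat
  obtain ⟨b, hbt, hab⟩ := hst a has
  exact ⟨b, hbt, fun hbs ↦ hat (hs.eq has hbs hab ▸ hbt), hab⟩

theorem isDershowitzMannaLT_val_of_toColex_lt_toColex [PartialOrder α] {s t : Finset α}
    (hst : toColex s < toColex t) : s.val.IsDershowitzMannaLT t.val := by
  classical
  obtain ⟨hne, hle⟩ := Finset.Colex.toColex_lt_toColex.mp hst
  refine ⟨(s ∩ t).val, (s \ t).val, (t \ s).val, ?_, ?_, ?_, fun a ha ↦ ?_⟩
  · intro hempty
    have hts : t ⊆ s := Finset.sdiff_eq_empty_iff_subset.mp (Finset.val_eq_zero.mp hempty)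
    refine hne (Finset.Subset.antisymm (fun a has ↦ ?_) hts)
    by_contra hat
    obtain ⟨b, hbt, hbs, -⟩ := hle has hat
    exact hbs (hts hbt)
  · rw [Finset.inter_val, Finset.sdiff_val, add_comm, Multiset.sub_add_inter]
  · rw [Finset.inter_comm, Finset.inter_val, Finset.sdiff_val, add_comm, Multiset.sub_add_inter]
  · obtain ⟨has, hat⟩ := Finset.mem_sdiff.mp ha
    obtain ⟨b, hbt, hbs, hab⟩ := hle has hat
    exact ⟨b, Finset.mem_sdiff.mpr ⟨hbt, hbs⟩, hab.lt_of_ne (ne_of_mem_of_not_mem has hbs)⟩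

instance wellFoundedLT_colex_finset [PartialOrder α] [WellFoundedLT α] :
    WellFoundedLT (Colex (Finset α)) :=
  ⟨Subrelation.wf isDershowitzMannaLT_val_of_toColex_lt_toColex <|
    InvImage.wf (fun s : Colex (Finset α) ↦ (ofColex s).val)
      Multiset.wellFounded_isDershowitzMannaLT⟩

end Order

/-- A finite join-cover of `a` that is minimal in the colexicographic order on finite sets. Unlike
in `MinJoinCover`, the competing covers are finite and need not be antichains. -/
def ColexMinJoinCover {L : Type*} [SemilatticeSup L] [OrderBot L] (a : L) (C : Finset L) : Prop :=
  MinimalFor (fun S : Finset L ↦ a ≤ S.sup id) toColex C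

namespace ColexMinJoinCover

variable {L : Type*} {a : L} {C : Finset L}

theorem not_le_sup_of_toColex_lt [SemilatticeSup L] [OrderBot L] (hC : ColexMinJoinCover a C)
    {D : Finset L} (hDC : toColex D < toColex C) : ¬ a ≤ D.sup id :=
  fun hD ↦ hDC.not_ge (hC.2 hD hDC.le)

theorem not_le_sup_erase [SemilatticeSup L] [OrderBot L] [DecidableEq L]
    (hC : ColexMinJoinCover a C) {c : L} (hc : c ∈ C) : ¬ c ≤ (C.erase c).sup id := by
  intro hle
  refine hC.not_le_sup_of_toColex_lt
    (Finset.Colex.toColex_lt_toColex_of_ssubset (Finset.erase_ssubset hc)) (hC.1.trans ?_)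
  rw [← Finset.insert_erase hc, Finset.sup_insert, Finset.erase_insert (C.notMem_erase c)]
  exact sup_le hle le_rfl

theorem isAntichain [SemilatticeSup L] [OrderBot L] (hC : ColexMinJoinCover a C) :
    IsAntichain (· ≤ ·) (C : Set L) := by
  classical
  intro c hc d hd hne hcd
  exact hC.not_le_sup_erase hc
    (hcd.trans (Finset.le_sup (f := id) (Finset.mem_erase.mpr ⟨hne.symm, hd⟩)))

theorem joinIrr [Lattice L] [OrderBot L] (hC : ColexMinJoinCover a C) {c : L} (hc : c ∈ C) :
    JoinIrr c := by
  classical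
  refine ⟨fun hbot ↦ hC.not_le_sup_erase hc (hbot ▸ bot_le), fun x y hxy ↦ ?_⟩
  by_contra! ⟨hcx, hcy⟩
  have hxc : x ≤ c := hxy ▸ le_sup_left
  have hyc : y ≤ c := hxy ▸ le_sup_right
  let D : Finset L := insert x (insert y (C.erase c))
  have hcD : c ∉ D := by simp [D, hcx, hcy]
  have hDC : toColex D < toColex C := by
    refine Finset.Colex.toColex_lt_toColex.mpr
      ⟨(ne_of_mem_of_not_mem' hc hcD).symm, fun d hdD hdC ↦ ?_⟩
    have hd : d = x ∨ d = y := by grind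
    exact ⟨c, hc, hcD, by rcases hd with rfl | rfl <;> assumption⟩
  have hsup : D.sup id = C.sup id := by
    rw [← Finset.insert_erase hc]
    simp [D, hxy, sup_assoc]
  exact hC.not_le_sup_of_toColex_lt hDC (hsup ▸ hC.1)

theorem minJoinCover [CompleteLattice L] (ha : IsCompactElement a)
    (hC : ColexMinJoinCover a C) : MinJoinCover a (C : Set L) := by
  refine ⟨Finset.sup_id_eq_sSup C ▸ hC.1, hC.isAntichain, fun D hD haD hDC ↦ ?_⟩
  obtain ⟨F, hFD, haF⟩ :=
    (CompleteLattice.isCompactElement_iff_exists_le_sSup_of_le_sSup L a).mp ha D haD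
  have hFC : toColex F ≤ toColex C :=
    Refines.toColex_le_toColex (fun d hd ↦ hDC d (hFD hd)) (hD.subset hFD)
  have hCF : C = F := toColex_inj.mp (le_antisymm (hC.2 haF hFC) hFC)
  exact hDC.eq_of_subset hD (hCF ▸ hFD)

theorem exists_toColex_le [SemilatticeSup L] [OrderBot L] [WellFoundedLT L] {A : Finset L}
    (hA : a ≤ A.sup id) : ∃ C, ColexMinJoinCover a C ∧ toColex C ≤ toColex A := by
  obtain ⟨C, hCA, hC⟩ := exists_minimal_le_of_wellFoundedLT
    (fun S : Colex (Finset L) ↦ a ≤ (ofColex S).sup id) (toColex A) hA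
  exact ⟨ofColex C, ⟨hC.1, fun _ hD ↦ hC.2 hD⟩, hCA⟩

end ColexMinJoinCover

section Neighbourhood

variable {L : Type*} [CompleteLattice L]

theorem exists_minJoinCover_refines [WellFoundedLT L] {a : L} (ha : IsCompactElement a) {A : Set L}
    (hA : a ≤ sSup A) : ∃ C, MinJoinCover a C ∧ Refines C A ∧ ∀ c ∈ C, JoinIrr c := by
  obtain ⟨F, hFA, haF⟩ :=
    (CompleteLattice.isCompactElement_iff_exists_le_sSup_of_le_sSup L a).mp ha A hA
  obtain ⟨C, hC, hCF⟩ := ColexMinJoinCover.exists_toColex_le haF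
  exact ⟨C, hC.minJoinCover ha, fun c hc ↦
    have ⟨f, hf, hcf⟩ := refines_of_toColex_le_toColex hCF c hc
    ⟨f, hFA hf, hcf⟩, fun c hc ↦ hC.joinIrr hc⟩

theorem le_sSup_of_mem_sigmaM {j : {x : L // JoinIrr x}} {S : Set {x : L // JoinIrr x}}
    (hS : S ∈ sigmaM j) {A : Set L} (hSA : ∀ k ∈ S, ∃ b ∈ A, (k : L) ≤ b) :
    (j : L) ≤ sSup A := by
  obtain ⟨C, hC, hCS⟩ := hS
  refine hC.1.trans (sSup_le fun c hc ↦ ?_)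
  obtain ⟨k, hk, rfl⟩ := hCS hc
  obtain ⟨b, hb, hkb⟩ := hSA k hk
  exact hkb.trans (le_sSup hb)

theorem exists_mem_sigmaM_of_le_sSup [WellFoundedLT L] {j : {x : L // JoinIrr x}}
    (hj : IsCompactElement (j : L)) {A : Set L} (hA : (j : L) ≤ sSup A) :
    ∃ S ∈ sigmaM j, ∀ k ∈ S, ∃ b ∈ A, (k : L) ≤ b := by
  obtain ⟨C, hC, hCA, hirr⟩ := exists_minJoinCover_refines hj hA
  exact ⟨Subtype.val ⁻¹' C, ⟨C, hC, fun c hc ↦ ⟨⟨c, hirr c hc⟩, hc, rfl⟩⟩, fun k hk ↦ hCA k hk⟩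

theorem le_sup_iff_exists_mem_sigmaM [WellFoundedLT L] {j : {x : L // JoinIrr x}}
    (hj : IsCompactElement (j : L)) {a b : L} :
    (j : L) ≤ a ⊔ b ↔ ∃ S ∈ sigmaM j, ∀ k ∈ S, (k : L) ≤ a ∨ (k : L) ≤ b := by
  have hpair : (j : L) ≤ sSup {a, b} ↔
      ∃ S ∈ sigmaM j, ∀ k ∈ S, ∃ c ∈ ({a, b} : Set L), (k : L) ≤ c :=
    ⟨exists_mem_sigmaM_of_le_sSup hj, fun ⟨_, hS, hSA⟩ ↦ le_sSup_of_mem_sigmaM hS hSA⟩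
  simpa using hpair

end Neighbourhood

theorem standard_translation_local_general {L P : Type*} [CompleteLattice L] [WellFoundedLT L]
    [WellFoundedGT L] (v : P → L) (t : LTerm P) (j : {x : L // JoinIrr x}) :
    (j : L) ≤ t.interp v ↔
      MSat sigmaM (fun p ↦ {k : {x : L // JoinIrr x} | (k : L) ≤ v p}) (STr t) j := by
  have hcompact : ∀ a : L, IsCompactElement a :=
    (CompleteLattice.isSupFiniteCompact_iff_all_elements_compact L).mp
      (CompleteLattice.WellFoundedGT.isSupFiniteCompact L)
  induction t generalizing j with
  | bot => simp [LTerm.interp, STr, MSat, j.2.1]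
  | top => simp [LTerm.interp, STr, MSat]
  | atom p => rfl
  | or t s iht ihs =>
    simp only [LTerm.interp, STr, MSat, ← iht, ← ihs]
    exact le_sup_iff_exists_mem_sigmaM (hcompact j)
  | and t s iht ihs => simp only [LTerm.interp, STr, MSat, le_inf_iff, iht, ihs]

/-- For a finite lattice `L` with more than one element, any lattice
term `t` over `AtProp`, any join-irreducible `j`, and any assignment
`v : AtProp ∪ Nom → L` sending nominals to join-irreducibles with `v(jnom) = j`:
`L, v ⊨ jnom ≤ t` iff `F_L, v*, j ⊩ ST(t)`, where `v*(x) = {k ∈ J(L) | k ≤ v(x)}`. -/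
theorem standard_translation_local {L P N : Type*} [CompleteLattice L] [Fintype L]
    [Nontrivial L]
    (v : P ⊕ N → L) (hnom : ∀ n : N, JoinIrr (v (Sum.inr n)))
    (t : LTerm P) (jnom : N) (j : L) (hj : JoinIrr j) (hvj : v (Sum.inr jnom) = j) :
    j ≤ t.interp (fun p => v (Sum.inl p)) ↔
      MSat sigmaM
        (fun p => {k : {x : L // JoinIrr x} | (k : L) ≤ v (Sum.inl p)})
        (STr t) ⟨j, hj⟩ := by
  exact standard_translation_local_general (fun p => v (Sum.inl p)) t ⟨j, hj⟩
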